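/- For every sequence (μ_k)_{k∈ℕ} of real numbers there exists a multiplicative S-cocycle W = (W_t)_{t∈ℝ} on L²(ℝ), Markovian with respect to ξ, such that: (i) W_t − I is a Hilbert–Schmidt operator for every t ∈ ℝ, i.e. ∑_i ‖(W_t − I) e_i‖² < ∞ for some (equivalently, any) Hilbert basis (e_i) of L²(ℝ); and (ii) there is an orthonormal family (g_k)_{k∈ℕ} in H_{0]} with W_{-t} S_{-t} g_k = e^{i μ_k t} g_k for all t ≥ 0 and all k; i.e. the unitary part of the Wold decomposition of the perturbed isometric semigroup (W_{-t} S_{-t}|_{H_{0]}})_{t≥0} has the prescribed pure point spectrum. -/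

import Mathlib

open Filter Topology MeasureTheory

noncomputable section

/-- `H_{0]}`: the elements of `L²(ℝ)` vanishing a.e. on `(-∞, 0)`. -/
def pastSet : Set (Lp ℂ 2 (volume : Measure ℝ)) :=
  {f | (f : ℝ → ℂ) =ᵐ[(volume : Measure ℝ).restrict (Set.Iio (0 : ℝ))] 0}

/-- `H_{[t}` (`t ≥ 0`): the elements of `L²(ℝ)` vanishing a.e. on `(-t, ∞)`;
this is the closed span of the increments `ξ_s - ξ_r`, `s, r ≥ t`, of the cocycle
`ξ_t = 1_{[-t,0]}`, and `H_{[t} = S_t H_{[0}`. -/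
def futSet (t : ℝ) : Set (Lp ℂ 2 (volume : Measure ℝ)) :=
  {f | (f : ℝ → ℂ) =ᵐ[(volume : Measure ℝ).restrict (Set.Ioi (-t))] 0}

set_option linter.unusedSectionVars false

section Abstract

variable {H : Type*} [NormedAddCommGroup H] [InnerProductSpace ℂ H] [CompleteSpace H]

/-- Two continuous linear maps agreeing on a Hilbert basis are equal. -/
lemma aux_ext {ι : Type*} {F : Type*} [NormedAddCommGroup F] [NormedSpace ℂ F]
    (b : HilbertBasis ι ℂ H) (f g : H →L[ℂ] F)
    (h : ∀ i, f (b i) = g (b i)) (x : H) : f x = g x := by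
  have : f = g := by
    apply ContinuousLinearMap.ext_on (s := Set.range b)
    · rw [Submodule.dense_iff_topologicalClosure_eq_top]
      exact b.dense_span
    · rintro _ ⟨i, rfl⟩
      exact h i
  rw [this]

/-- The linear isometry mapping a Hilbert basis to an orthonormal family. -/
lemma aux_isom {ι : Type*} (b : HilbertBasis ι ℂ H) (v : ι → H) (hv : Orthonormal ℂ v) :
    ∃ R : H →ₗᵢ[ℂ] H, ∀ i, R (b i) = v i := by
  classical
  refine ⟨hv.orthogonalFamily.linearIsometry.comp b.repr.toLinearIsometry, fun i => ?_⟩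
  change hv.orthogonalFamily.linearIsometry (b.repr (b i)) = v i
  rw [b.repr_self, OrthogonalFamily.linearIsometry_apply_single]
  simp

lemma aux_isomEquiv {ι : Type*} (b : HilbertBasis ι ℂ H) (v : ι → H) (hv : Orthonormal ℂ v)
    (hc : ∀ x, (∀ i, inner ℂ (v i) x = 0) → x = 0) :
    ∃ R : H ≃ₗᵢ[ℂ] H, ∀ i, R (b i) = v i := by
  classical
  have hbot : (Submodule.span ℂ (Set.range v))ᗮ = ⊥ := by
    rw [Submodule.eq_bot_iff]
    intro x hx
    apply hc
    intro i
    exact (Submodule.mem_orthogonal _ _).1 hx _ (Submodule.subset_span ⟨i, rfl⟩)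
  let c := HilbertBasis.mkOfOrthogonalEqBot hv hbot
  refine ⟨b.repr.trans c.repr.symm, fun i => ?_⟩
  change c.repr.symm (b.repr (b i)) = v i
  rw [b.repr_self, c.repr_symm_single]
  simp [c]

lemma aux_parseval {ι : Type*} (b : HilbertBasis ι ℂ H) (x : H) :
    HasSum (fun i => ‖inner ℂ (b i) x‖ ^ 2) (‖x‖ ^ 2) := by
  have h := (b.hasSum_inner_mul_inner x x)
  have h2 := Complex.hasSum_re h
  have e : (inner ℂ x x : ℂ).re = ‖x‖ ^ 2 := by
    have := inner_self_eq_norm_sq (𝕜 := ℂ) x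
    simpa using this
  rw [e] at h2
  convert h2 using 2 with i
  rw [← inner_conj_symm x (b i), Complex.conj_mul']
  norm_cast

/-- Hilbert–Schmidt bound through the adjoint. -/
lemma aux_hs {ι J : Type*} (b : HilbertBasis ι ℂ H) (c : J → H) (hc : Orthonormal ℂ c)
    (x : J → H) (y : ι → H) (hy : Summable fun i => ‖y i‖ ^ 2)
    (hxy : ∀ i j, inner ℂ (b i) (x j) = inner ℂ (y i) (c j)) :
    Summable fun j => ‖x j‖ ^ 2 := by
  have h1 : Summable (fun p : ι × J => ‖inner ℂ (y p.1) (c p.2)‖ ^ 2) := by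
    rw [summable_prod_of_nonneg (fun _ => by positivity)]
    have e : ∀ i j, ‖inner ℂ (y i) (c j)‖ = ‖inner ℂ (c j) (y i)‖ := fun i j => norm_inner_symm _ _
    simp only [e]
    refine ⟨fun i => hc.inner_products_summable (y i), ?_⟩
    refine Summable.of_nonneg_of_le (fun i => tsum_nonneg fun _ => by positivity)
      (fun i => hc.tsum_inner_products_le (y i)) hy
  have h2 := h1.prod_symm.prod
  refine h2.congr fun j => ?_
  rw [← (aux_parseval b (x j)).tsum_eq]
  simp [hxy]

lemma aux_shift_summable (D : ℕ × ℕ → ℝ) (hD : Summable D) :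
    Summable (fun m : ℕ × ℕ => match m with | (_, 0) => (0 : ℝ) | (k, n + 1) => D (k, n)) := by
  have hinj : Function.Injective (fun m : ℕ × ℕ => (m.1, m.2 + 1)) := by
    rintro ⟨a, b⟩ ⟨c, d⟩ h
    simpa using h
  rw [← hinj.summable_iff]
  · exact hD
  · rintro ⟨k, n⟩ h
    cases n with
    | zero => rfl
    | succ n => exact absurd ⟨(k, n), rfl⟩ h

lemma aux_cont (ι : Type*) (b : HilbertBasis ι ℂ H) (U : ℝ → H ≃ₗᵢ[ℂ] H)
    (h : ∀ i, Continuous fun t => U t (b i)) (x : H) : Continuous fun t => U t x := by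
  let V : Submodule ℂ H :=
    { carrier := {x | Continuous fun t => U t x}
      add_mem' := by
        intro a c ha hc
        simp only [Set.mem_ofPred_eq, map_add] at *
        exact ha.add hc
      zero_mem' := by simp [continuous_const]
      smul_mem' := by
        intro a c hc
        simp only [Set.mem_ofPred_eq, map_smul] at *
        exact hc.const_smul a }
  have hV : IsClosed (V : Set H) := by
    rw [← isSeqClosed_iff_isClosed]
    intro s a hs hsa
    change Continuous fun t => U t a
    have : TendstoUniformly (fun n t => U t (s n)) (fun t => U t a) atTop := by
      rw [Metric.tendstoUniformly_iff]
      intro ε hε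
      filter_upwards [Metric.tendsto_nhds.1 hsa ε hε] with n hn t
      rw [(U t).dist_map, dist_comm]
      exact hn
    exact this.continuous (Frequently.of_forall fun n => hs n)
  have : (⊤ : Submodule ℂ H) ≤ V := by
    rw [← b.dense_span]
    apply Submodule.topologicalClosure_minimal _ _ hV
    rw [Submodule.span_le]
    rintro _ ⟨i, rfl⟩
    exact h i
  exact this (Submodule.mem_top (x := x))

lemma aux_cont2 (U : ℝ → H ≃ₗᵢ[ℂ] H) (h : ∀ x, Continuous fun t => U t x)
    (f : ℝ → H) (hf : Continuous f) : Continuous fun t => U t (f t) := by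
  rw [continuous_iff_continuousAt]
  intro t₀
  have h1 : Tendsto (fun t => U t (f t - f t₀)) (𝓝 t₀) (𝓝 0) := by
    rw [tendsto_zero_iff_norm_tendsto_zero]
    simp only [LinearIsometryEquiv.norm_map]
    rw [← tendsto_zero_iff_norm_tendsto_zero]
    have := (hf.tendsto t₀).sub_const (f t₀)
    simpa using this
  have h2 := h1.add ((h (f t₀)).tendsto t₀)
  simpa [ContinuousAt] using h2

lemma aux_countable [SecondCountableTopology H] {ι : Type*} (b : ι → H) (hb : Orthonormal ℂ b) :
    Countable ι := by
  have h := Set.PairwiseDisjoint.countable_of_isOpen (a := (Set.univ : Set ι))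
    (s := fun i => Metric.ball (b i) (1/2)) ?_ (fun i _ => Metric.isOpen_ball)
    (fun i _ => ⟨b i, Metric.mem_ball_self (by norm_num)⟩)
  · exact Set.countable_univ_iff.1 h
  · intro i _ j _ hij
    apply Metric.ball_disjoint_ball
    have h1 : ‖b i - b j‖ ^ 2 = 2 := by
      rw [@norm_sub_sq ℂ, hb.2 hij, hb.1 i, hb.1 j]; norm_num
    rw [dist_eq_norm]
    nlinarith [norm_nonneg (b i - b j)]

lemma aux_extend (φ : ℕ × ℕ → H) (hφ : Orthonormal ℂ φ) :
    ∃ (J : Set H) (b : HilbertBasis ((ℕ × ℕ) ⊕ J) ℂ H), ∀ m, b (Sum.inl m) = φ m := by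
  obtain ⟨w, b, hw, hb⟩ := hφ.toSubtypeRange.exists_hilbertBasis_extension
  let f : (ℕ × ℕ) ⊕ ↥(w \ Set.range φ) → w :=
    Sum.elim (fun m => ⟨φ m, hw ⟨m, rfl⟩⟩) (fun x => ⟨x.1, x.2.1⟩)
  have hinj : Function.Injective φ := hφ.linearIndependent.injective
  have hf : Function.Bijective f := by
    constructor
    · rintro (m | x) (m' | x') h
      · simp only [f, Sum.elim_inl, Subtype.mk.injEq] at h
        rw [hinj h]
      · simp only [f, Sum.elim_inl, Sum.elim_inr, Subtype.mk.injEq] at h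
        exact absurd ⟨m, h⟩ x'.2.2
      · simp only [f, Sum.elim_inl, Sum.elim_inr, Subtype.mk.injEq] at h
        exact absurd ⟨m', h.symm⟩ x.2.2
      · simp only [f, Sum.elim_inr, Subtype.mk.injEq] at h
        rw [Subtype.ext h]
    · rintro ⟨x, hx⟩
      by_cases h : x ∈ Set.range φ
      · obtain ⟨m, rfl⟩ := h
        exact ⟨Sum.inl m, rfl⟩
      · exact ⟨Sum.inr ⟨x, hx, h⟩, rfl⟩
  refine ⟨w \ Set.range φ, HilbertBasis.mk (b.orthonormal.comp f hf.1) ?_, fun m => ?_⟩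
  · rw [hf.2.range_comp, b.dense_span]
  · rw [HilbertBasis.coe_mk]
    simp [hb, f]

lemma aux_main (S : ℝ → (H ≃ₗᵢ[ℂ] H))
    (hSgrp : ∀ s t : ℝ, ∀ η, S (s + t) η = S s (S t η))
    (hS0 : ∀ η, S 0 η = η)
    (hScont : ∀ η, Continuous fun t : ℝ => S t η)
    (φ : ℕ × ℕ → H) (hφ : Orthonormal ℂ φ) (ω : ℝ → ℕ → ℂ)
    (hω : ∀ t k, ‖ω t k‖ = 1) (hω0 : ∀ k, ω 0 k = 1) (hωadd : ∀ s t k, ω (s + t) k = ω s k * ω t k)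
    (hωc : ∀ k, Continuous fun t => ω t k)
    (hsum : ∀ t, Summable fun m : ℕ × ℕ => ‖S t (φ m) - ω t m.1 • φ m‖ ^ 2) :
    ∃ (J : Set H) (b : HilbertBasis ((ℕ × ℕ) ⊕ J) ℂ H) (U : ℝ → (H ≃ₗᵢ[ℂ] H)),
      (∀ s t η, U (s + t) η = U s (U t η)) ∧ (∀ η, U 0 η = η) ∧
      (∀ η, Continuous fun t => U t η) ∧
      (∀ t k, U t (φ (k, 0)) = ω t k • φ (k, 0)) ∧
      (∀ t h, (∀ m, inner ℂ (φ m) h = 0) → (∀ m, inner ℂ (φ m) (S t h) = 0) → U t h = S t h) ∧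
      (∀ t, Summable fun i => ‖U t (b i) - S t (b i)‖ ^ 2) := by
  classical
  obtain ⟨J, b, hb⟩ := aux_extend φ hφ
  let σ : (ℕ × ℕ) ⊕ J → (ℕ × ℕ) ⊕ J := Sum.map (fun m => (m.1, m.2 + 1)) id
  have hσ : Function.Injective σ := by
    apply Function.Injective.sumMap _ Function.injective_id
    rintro ⟨a, b⟩ ⟨c, d⟩ h
    simpa using h
  have hσ0 : ∀ k i, σ i ≠ Sum.inl (k, 0) := by
    rintro k (m | j) <;> simp [σ]
  have hcase : ∀ i, (∃ k, i = Sum.inl (k, 0)) ∨ ∃ i', i = σ i' := by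
    rintro (⟨k, n⟩ | j)
    · cases n with
      | zero => exact Or.inl ⟨k, rfl⟩
      | succ n => exact Or.inr ⟨Sum.inl (k, n), rfl⟩
    · exact Or.inr ⟨Sum.inr j, rfl⟩
  obtain ⟨R, hR⟩ := aux_isom b (b ∘ σ) (b.orthonormal.comp σ hσ)
  simp only [Function.comp_apply] at hR
  have hbo := orthonormal_iff_ite.1 b.orthonormal
  -- the vectors `φ (k, 0)` are orthogonal to the range of `R`
  have hR0 : ∀ k h, inner ℂ (b (Sum.inl (k, 0))) (R h) = 0 := by
    intro k h
    refine aux_ext b ((innerSL ℂ (b (Sum.inl (k, 0)))).comp R.toContinuousLinearMap) 0 ?_ h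
    intro i
    change inner ℂ (b (Sum.inl (k, 0))) (R (b i)) = 0
    rw [hR, hbo, if_neg (hσ0 k i).symm]
  have hR0' : ∀ k h, inner ℂ (R h) (b (Sum.inl (k, 0))) = 0 := by
    intro k h
    rw [inner_eq_zero_symm, hR0]
  -- `R` fixes the orthogonal complement of the `φ m`
  have hRfix : ∀ h, (∀ m, inner ℂ (φ m) h = 0) → R h = h := by
    intro h hh
    have h1 := b.hasSum_repr h
    have h2 := h1.mapL R.toContinuousLinearMap
    refine h2.unique ?_
    convert h1 using 1
    funext i
    change R _ = _
    rw [map_smul, b.repr_apply_apply, hR]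
    rcases i with m | j
    · rw [hb, hh]; simp
    · rfl
  -- the image of the basis
  have hu : ∀ t, ∃ u : (ℕ × ℕ) ⊕ J → H, (∀ k, u (Sum.inl (k, 0)) = ω t k • b (Sum.inl (k, 0))) ∧
      ∀ i, u (σ i) = R (S t (b i)) := by
    intro t
    refine ⟨fun i => if h : ∃ i', i = σ i' then R (S t (b h.choose)) else
      match i with | Sum.inl (k, _) => ω t k • b (Sum.inl (k, 0)) | Sum.inr _ => 0, ?_, ?_⟩
    · intro k
      have : ¬ ∃ i', (Sum.inl (k, 0) : (ℕ × ℕ) ⊕ J) = σ i' := by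
        rintro ⟨i', h⟩
        exact hσ0 k i' h.symm
      simp [this]
    · intro i
      have h : ∃ i', σ i = σ i' := ⟨i, rfl⟩
      simp only [h, dite_true]
      rw [← hσ h.choose_spec]
  have hU : ∀ t, ∃ U : H ≃ₗᵢ[ℂ] H, (∀ k, U (b (Sum.inl (k, 0))) = ω t k • b (Sum.inl (k, 0))) ∧
      ∀ i, U (b (σ i)) = R (S t (b i)) := by
    intro t
    obtain ⟨u, hu0, hu1⟩ := hu t
    have huo : Orthonormal ℂ u := by
      rw [orthonormal_iff_ite]
      intro i j
      rcases hcase i with ⟨k, rfl⟩ | ⟨i, rfl⟩ <;> rcases hcase j with ⟨l, rfl⟩ | ⟨j, rfl⟩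
      · rw [hu0, hu0, inner_smul_left, inner_smul_right, hbo]
        by_cases hkl : k = l
        · subst hkl
          simp only [if_true, mul_one]
          rw [Complex.conj_mul', hω]; simp
        · simp [hkl]
      · rw [hu0, hu1, inner_smul_left, hR0, if_neg (hσ0 k j).symm, mul_zero]
      · rw [hu0, hu1, inner_smul_right, hR0', if_neg (hσ0 l i), mul_zero]
      · rw [hu1, hu1, R.inner_map_map, (S t).inner_map_map, hbo]
        simp [hσ.eq_iff]
    have hcomp : ∀ x, (∀ i, inner ℂ (u i) x = 0) → x = 0 := by
      intro x hx
      have h0 : ∀ k, inner ℂ (b (Sum.inl (k, 0))) x = 0 := by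
        intro k
        have := hx (Sum.inl (k, 0))
        rw [hu0, inner_smul_left, mul_eq_zero] at this
        rcases this with h | h
        · rw [map_eq_zero] at h
          have := hω t k
          rw [h] at this
          simp at this
        · exact h
      have h1 : ∀ h, inner ℂ x (R (S t h)) = 0 := by
        intro h
        refine aux_ext b ((innerSL ℂ x).comp (R.toContinuousLinearMap.comp
          (S t).toContinuousLinearEquiv.toContinuousLinearMap)) 0 ?_ h
        intro i
        change inner ℂ x (R (S t (b i))) = 0
        rw [inner_eq_zero_symm, ← hu1, hx]
      have h2 : ∀ i, inner ℂ (b i) x = 0 := by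
        intro i
        rcases hcase i with ⟨k, rfl⟩ | ⟨i, rfl⟩
        · exact h0 k
        · have := h1 ((S t).symm (b i))
          rw [LinearIsometryEquiv.apply_symm_apply, hR] at this
          rw [inner_eq_zero_symm, this]
      have := (aux_parseval b x).tsum_eq
      simp only [h2] at this
      simpa using this.symm
    obtain ⟨U, hU⟩ := aux_isomEquiv b u huo hcomp
    exact ⟨U, fun k => by rw [hU, hu0], fun i => by rw [hU, hu1]⟩
  choose U hU0 hU1 using hU
  have hUR : ∀ t h, U t (R h) = R (S t h) := by
    intro t h
    refine aux_ext b ((U t).toContinuousLinearEquiv.toContinuousLinearMap.comp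
      R.toContinuousLinearMap) (R.toContinuousLinearMap.comp
      (S t).toContinuousLinearEquiv.toContinuousLinearMap) ?_ h
    intro i
    change U t (R (b i)) = R (S t (b i))
    rw [hR, hU1]
  refine ⟨J, b, U, ?_, ?_, ?_, ?_, ?_, ?_⟩
  · intro s t η
    refine aux_ext b (U (s + t)).toContinuousLinearEquiv.toContinuousLinearMap
      ((U s).toContinuousLinearEquiv.toContinuousLinearMap.comp
        (U t).toContinuousLinearEquiv.toContinuousLinearMap) ?_ η
    intro i
    change U (s + t) (b i) = U s (U t (b i))
    rcases hcase i with ⟨k, rfl⟩ | ⟨i, rfl⟩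
    · rw [hU0, hU0, map_smul, hU0, hωadd, smul_smul, mul_comm]
    · rw [hU1, hU1, hUR, hSgrp]
  · intro η
    refine aux_ext b (U 0).toContinuousLinearEquiv.toContinuousLinearMap
      (ContinuousLinearMap.id ℂ H) ?_ η
    intro i
    change U 0 (b i) = b i
    rcases hcase i with ⟨k, rfl⟩ | ⟨i, rfl⟩
    · rw [hU0, hω0, one_smul]
    · rw [hU1, hS0, hR]
  · apply aux_cont _ b
    intro i
    rcases hcase i with ⟨k, rfl⟩ | ⟨i, rfl⟩
    · simp only [hU0]
      exact (hωc k).smul continuous_const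
    · simp only [hU1]
      exact R.continuous.comp (hScont _)
  · intro t k
    rw [← hb, hU0]
  · intro t h h1 h2
    rw [← hRfix h h1, hUR, hRfix h h1, hRfix _ h2]
  · intro t
    apply Summable.sum
    · -- the `φ` part
      have hD := hsum t
      have hE := aux_shift_summable _ hD
      refine Summable.of_nonneg_of_le (fun _ => sq_nonneg _) ?_ ((hD.add hE).mul_left 2)
      rintro ⟨k, n⟩
      simp only [Function.comp_apply]
      cases n with
      | zero =>
        rw [hU0, hb, ← norm_neg, neg_sub]
        simp only [add_zero]
        nlinarith [sq_nonneg ‖S t (φ (k, 0)) - ω t k • φ (k, 0)‖]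
      | succ n =>
        have e : U t (b (Sum.inl (k, n + 1))) = R (S t (φ (k, n))) := by
          have := hU1 t (Sum.inl (k, n))
          rwa [hb] at this
        have e2 : R (φ (k, n)) = φ (k, n + 1) := by
          rw [← hb, hR, ← hb]; rfl
        have e3 : U t (b (Sum.inl (k, n + 1))) - S t (b (Sum.inl (k, n + 1))) =
            R (S t (φ (k, n)) - ω t k • φ (k, n)) -
              (S t (φ (k, n + 1)) - ω t k • φ (k, n + 1)) := by
          rw [e, hb, map_sub, map_smul, e2]; abel
        rw [e3]
        have h3 := norm_sub_le (R (S t (φ (k, n)) - ω t k • φ (k, n)))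
              (S t (φ (k, n + 1)) - ω t k • φ (k, n + 1))
        rw [R.norm_map] at h3
        have h4 := norm_nonneg (R (S t (φ (k, n)) - ω t k • φ (k, n)) -
              (S t (φ (k, n + 1)) - ω t k • φ (k, n + 1)))
        simp only
        nlinarith [sq_nonneg (‖S t (φ (k, n)) - ω t k • φ (k, n)‖ -
          ‖S t (φ (k, n + 1)) - ω t k • φ (k, n + 1)‖)]
    · -- the complementary part
      let d : ℕ × ℕ → H := fun m => S (-t) (φ m) - ω (-t) m.1 • φ m
      have hd : ∀ m (j : J), inner ℂ (φ m) (S t (b (Sum.inr j))) = inner ℂ (d m) (b (Sum.inr j)) := by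
        intro m j
        have e1 : φ m = S t (S (-t) (φ m)) := by rw [← hSgrp]; simp [hS0]
        rw [inner_sub_left, inner_smul_left, ← hb m, hbo]
        simp only [reduceCtorEq, if_false, mul_zero, sub_zero]
        rw [hb]
        conv_lhs => rw [e1, (S t).inner_map_map]
      let y : (ℕ × ℕ) ⊕ J → H := fun i => match i with
        | Sum.inl (k, 0) => - d (k, 0)
        | Sum.inl (k, n + 1) => d (k, n) - d (k, n + 1)
        | Sum.inr _ => 0
      refine aux_hs b (fun j => b (Sum.inr j)) (b.orthonormal.comp _ Sum.inr_injective) _ y ?_ ?_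
      · apply Summable.sum
        · have hD := hsum (-t)
          have hE := aux_shift_summable _ hD
          refine Summable.of_nonneg_of_le (fun _ => sq_nonneg _) ?_ ((hD.add hE).mul_left 2)
          rintro ⟨k, n⟩
          cases n with
          | zero =>
            change ‖- d (k, 0)‖ ^ 2 ≤ 2 * (‖d (k, 0)‖ ^ 2 + 0)
            rw [norm_neg]
            nlinarith [sq_nonneg ‖d (k, 0)‖]
          | succ n =>
            change ‖d (k, n) - d (k, n + 1)‖ ^ 2 ≤ 2 * (‖d (k, n + 1)‖ ^ 2 + ‖d (k, n)‖ ^ 2)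
            have h3 := norm_sub_le (d (k, n)) (d (k, n + 1))
            have h4 := norm_nonneg (d (k, n) - d (k, n + 1))
            nlinarith [sq_nonneg (‖d (k, n)‖ - ‖d (k, n + 1)‖)]
        · have : ((fun i => ‖y i‖ ^ 2) ∘ Sum.inr) = fun _ => (0 : ℝ) := by
            funext j
            simp [y]
          rw [this]
          exact summable_zero
      · intro i j
        have e : U t (b (Sum.inr j)) = R (S t (b (Sum.inr j))) := hU1 t (Sum.inr j)
        rw [e, inner_sub_right]
        rcases i with ⟨k, n⟩ | j'
        · cases n with
          | zero =>
            change _ = inner ℂ (- d (k, 0)) _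
            rw [hR0, hb, hd, inner_neg_left, zero_sub]
          | succ n =>
            change _ = inner ℂ (d (k, n) - d (k, n + 1)) _
            have e2 : b (Sum.inl (k, n + 1)) = R (b (Sum.inl (k, n))) := by rw [hR]; rfl
            rw [inner_sub_left, ← hd, ← hd, e2, R.inner_map_map, ← e2, hb, hb]
        · change _ = inner ℂ (0 : H) _
          have e2 : R (b (Sum.inr j')) = b (Sum.inr j') := hR _
          conv_lhs => 
            enter [1]
            rw [← e2, R.inner_map_map]
          simp

end Abstract

section Concrete

/-- The basic function: a character cut off to the dyadic interval `[2^m, 2^(m+1))`. -/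
def bfun (a : ℝ) (m : ℕ) : ℝ → ℂ :=
  Set.indicator (Set.Ico ((2 : ℝ) ^ m) (2 ^ (m + 1)))
    (fun x => ((Real.sqrt (2 ^ m))⁻¹ : ℂ) * Complex.exp (-(Complex.I * a * x)))

lemma norm_char (a x : ℝ) : ‖Complex.exp (-(Complex.I * a * x))‖ = 1 := by
  have : -(Complex.I * a * x) = ((-(a * x) : ℝ) : ℂ) * Complex.I := by push_cast; ring
  rw [this, Complex.norm_exp_ofReal_mul_I]

lemma bfun_norm (a : ℝ) (m : ℕ) (x : ℝ) : ‖bfun a m x‖ =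
    ‖Set.indicator (Set.Ico ((2 : ℝ) ^ m) (2 ^ (m + 1)))
      (fun _ => ((Real.sqrt (2 ^ m))⁻¹ : ℝ)) x‖ := by
  unfold bfun
  by_cases hx : x ∈ Set.Ico ((2 : ℝ) ^ m) (2 ^ (m + 1))
  · rw [Set.indicator_of_mem hx, Set.indicator_of_mem hx, norm_mul, norm_char, mul_one]
    simp
  · rw [Set.indicator_of_notMem hx, Set.indicator_of_notMem hx]
    simp

lemma bfun_meas (a : ℝ) (m : ℕ) : Measurable (bfun a m) := by
  unfold bfun
  apply Measurable.indicator _ measurableSet_Ico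
  fun_prop

lemma bfun_memLp (a : ℝ) (m : ℕ) : MemLp (bfun a m) 2 (volume : Measure ℝ) := by
  have h : MemLp (Set.indicator (Set.Ico ((2 : ℝ) ^ m) (2 ^ (m + 1)))
      (fun _ => ((Real.sqrt (2 ^ m))⁻¹ : ℝ))) 2 (volume : Measure ℝ) :=
    memLp_indicator_const 2 measurableSet_Ico _ (Or.inr (by simp))
  exact h.of_le (bfun_meas a m).aestronglyMeasurable
    (Eventually.of_forall fun x => (bfun_norm a m x).le)

def bvec (a : ℝ) (m : ℕ) : Lp ℂ 2 (volume : Measure ℝ) := (bfun_memLp a m).toLp _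

lemma bvec_coe (a : ℝ) (m : ℕ) : (bvec a m : ℝ → ℂ) =ᵐ[volume] bfun a m :=
  (bfun_memLp a m).coeFn_toLp

lemma bvec_norm (a : ℝ) (m : ℕ) : ‖bvec a m‖ = 1 := by
  unfold bvec
  rw [Lp.norm_toLp, eLpNorm_congr_norm_ae (Eventually.of_forall (bfun_norm a m)),
    eLpNorm_indicator_const measurableSet_Ico (by norm_num) (by norm_num)]
  have h2 : (2 : ℝ) ^ (m + 1) - 2 ^ m = 2 ^ m := by ring
  rw [Real.volume_Ico, h2, ENNReal.toReal_mul, ← ENNReal.toReal_rpow,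
    ENNReal.toReal_ofReal (by positivity)]
  simp only [toReal_enorm, ENNReal.toReal_ofNat]
  rw [← Real.sqrt_eq_rpow, norm_inv, Real.norm_of_nonneg (Real.sqrt_nonneg _)]
  apply inv_mul_cancel₀
  positivity

lemma bvec_inner_zero (a : ℝ) (m : ℕ) (f : Lp ℂ 2 (volume : Measure ℝ))
    (h : ∀ᵐ x ∂(volume : Measure ℝ), x ∈ Set.Ico ((2 : ℝ) ^ m) (2 ^ (m + 1)) → f x = 0) :
    inner ℂ (bvec a m) f = 0 := by
  rw [L2.inner_def]
  apply integral_eq_zero_of_ae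
  filter_upwards [h, bvec_coe a m] with x hx hx2
  rw [hx2]
  by_cases hm : x ∈ Set.Ico ((2 : ℝ) ^ m) (2 ^ (m + 1))
  · rw [hx hm]; simp
  · rw [bfun, Set.indicator_of_notMem hm]; simp

lemma bvec_orth (a c : ℝ) (m n : ℕ) (hmn : m ≠ n) : inner ℂ (bvec a m) (bvec c n) = 0 := by
  apply bvec_inner_zero
  filter_upwards [bvec_coe c n] with x hx hm
  rw [hx, bfun, Set.indicator_of_notMem]
  rintro ⟨h1, h2⟩
  obtain ⟨h3, h4⟩ := hm
  rcases lt_or_gt_of_ne hmn with h | h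
  · have : (2 : ℝ) ^ (m + 1) ≤ 2 ^ n := pow_le_pow_right₀ (by norm_num) h
    linarith
  · have : (2 : ℝ) ^ (n + 1) ≤ 2 ^ m := pow_le_pow_right₀ (by norm_num) h
    linarith

lemma bfun_shift (a t : ℝ) (m : ℕ) (x : ℝ) :
    ‖bfun a m (x + t) - Complex.exp (-(Complex.I * a * t)) * bfun a m x‖ ≤
    ‖Set.indicator (Set.uIcc ((2 : ℝ) ^ m) (2 ^ m - t) ∪
        Set.uIcc ((2 : ℝ) ^ (m + 1)) (2 ^ (m + 1) - t))
      (fun _ => ((Real.sqrt (2 ^ m))⁻¹ : ℝ)) x‖ := by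
  have hexp : Complex.exp (-(Complex.I * a * ((x + t : ℝ) : ℂ))) =
      Complex.exp (-(Complex.I * a * t)) * Complex.exp (-(Complex.I * a * x)) := by
    rw [← Complex.exp_add]; congr 1; push_cast; ring
  have hn : ‖((Real.sqrt (2 ^ m))⁻¹ : ℂ)‖ = (Real.sqrt (2 ^ m))⁻¹ := by
    simp
  have hab : (2 : ℝ) ^ m ≤ 2 ^ (m + 1) := pow_le_pow_right₀ (by norm_num) (by omega)
  unfold bfun
  by_cases h1 : x + t ∈ Set.Ico ((2 : ℝ) ^ m) (2 ^ (m + 1)) <;>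
    by_cases h2 : x ∈ Set.Ico ((2 : ℝ) ^ m) (2 ^ (m + 1))
  · rw [Set.indicator_of_mem h1, Set.indicator_of_mem h2, hexp]
    have : ∀ p q r : ℂ, p * (q * r) - q * (p * r) = 0 := by intros; ring
    rw [this]; simp
  · rw [Set.indicator_of_mem h1, Set.indicator_of_notMem h2, Set.indicator_of_mem, mul_zero,
      sub_zero, norm_mul, norm_char, mul_one, hn]
    · exact le_abs_self _
    · simp only [Set.mem_Ico, not_and_or, not_le, not_lt, Set.mem_union, Set.mem_uIcc] at *
      rcases h2 with h2 | h2
      · left; right; constructor <;> linarith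
      · right; left; constructor <;> linarith
  · rw [Set.indicator_of_notMem h1, Set.indicator_of_mem h2, Set.indicator_of_mem, 
      zero_sub, norm_neg, norm_mul, norm_mul, norm_char, norm_char, one_mul, mul_one, hn]
    · exact le_abs_self _
    · simp only [Set.mem_Ico, not_and_or, not_le, not_lt, Set.mem_union, Set.mem_uIcc] at *
      rcases h1 with h1 | h1
      · left; left; constructor <;> linarith
      · right; right; constructor <;> linarith
  · rw [Set.indicator_of_notMem h1, Set.indicator_of_notMem h2]
    simp

lemma bvec_shift (S : Lp ℂ 2 (volume : Measure ℝ) ≃ₗᵢ[ℂ] Lp ℂ 2 (volume : Measure ℝ)) (t : ℝ)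
    (hSae : ∀ (η : Lp ℂ 2 (volume : Measure ℝ)),
      (S η : ℝ → ℂ) =ᵐ[(volume : Measure ℝ)] fun x => η (x + t)) (a : ℝ) (m : ℕ) :
    ‖S (bvec a m) - Complex.exp (-(Complex.I * a * t)) • bvec a m‖ ^ 2 ≤
      2 * |t| * (1 / 2) ^ m := by
  set E := Set.uIcc ((2 : ℝ) ^ m) (2 ^ m - t) ∪ Set.uIcc ((2 : ℝ) ^ (m + 1)) (2 ^ (m + 1) - t)
    with hE
  have hEm : MeasurableSet E := measurableSet_uIcc.union measurableSet_uIcc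
  have hvol : volume E ≤ ENNReal.ofReal (2 * |t|) := by
    refine (measure_union_le _ _).trans ?_
    rw [Real.volume_interval, Real.volume_interval, ← ENNReal.ofReal_add (abs_nonneg _) (abs_nonneg _)]
    apply ENNReal.ofReal_le_ofReal
    simp; linarith
  have hshift : (fun x => (bvec a m : ℝ → ℂ) (x + t)) =ᵐ[volume] fun x => bfun a m (x + t) :=
    (measurePreserving_add_right volume t).quasiMeasurePreserving.ae (bvec_coe a m)
  have h1 : ‖S (bvec a m) - Complex.exp (-(Complex.I * a * t)) • bvec a m‖ ≤
      (Real.sqrt (2 ^ m))⁻¹ * Real.sqrt (2 * |t|) := by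
    rw [Lp.norm_def]
    apply ENNReal.toReal_le_of_le_ofReal (by positivity)
    refine (eLpNorm_mono_ae (g := Set.indicator E (fun _ => ((Real.sqrt (2 ^ m))⁻¹ : ℝ))) ?_).trans ?_
    · filter_upwards [Lp.coeFn_sub (S (bvec a m)) (Complex.exp (-(Complex.I * a * t)) • bvec a m),
        Lp.coeFn_smul (Complex.exp (-(Complex.I * a * t))) (bvec a m), hSae (bvec a m),
        hshift, bvec_coe a m] with x h1 h2 h3 h4 h5
      rw [h1, Pi.sub_apply, h2, Pi.smul_apply, h3, h4, h5, smul_eq_mul]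
      exact bfun_shift a t m x
    · rw [eLpNorm_indicator_const hEm (by norm_num) (by norm_num),
        ENNReal.ofReal_mul (by positivity), Real.enorm_of_nonneg (by positivity)]
      gcongr
      rw [Real.sqrt_eq_rpow, ← ENNReal.ofReal_rpow_of_nonneg (by positivity) (by norm_num)]
      simp only [ENNReal.toReal_ofNat]
      gcongr
  calc _ ≤ ((Real.sqrt (2 ^ m))⁻¹ * Real.sqrt (2 * |t|)) ^ 2 := by gcongr
    _ = _ := by
      rw [mul_pow, inv_pow, Real.sq_sqrt (by positivity), Real.sq_sqrt (by positivity)]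
      rw [one_div, inv_pow]; ring

end Concrete

/-- Theorem 3.2 / Corollary 3.3: for every sequence `(μ_k)` of reals there
is a Markovian multiplicative `S`-cocycle `W` on `L²(ℝ)` such that each `W_t − I` is
Hilbert–Schmidt and the unitary part of the Wold decomposition of the perturbed isometric
semigroup `(W_{-t} S_{-t}|_{H_{0]}})` has pure point spectrum `{e^{i μ_k t}}`: there is an
orthonormal family `(g_k)` in `H_{0]}` with `W_{-t} S_{-t} g_k = e^{i μ_k t} g_k`. -/
theorem stmt12
    (S : ℝ → (Lp ℂ 2 (volume : Measure ℝ) ≃ₗᵢ[ℂ] Lp ℂ 2 (volume : Measure ℝ)))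
    (hSgrp : ∀ s t : ℝ, ∀ η, S (s + t) η = S s (S t η))
    (hS0 : ∀ η, S 0 η = η)
    (hScont : ∀ η, Continuous fun t : ℝ => S t η)
    (hSae : ∀ (t : ℝ) (η : Lp ℂ 2 (volume : Measure ℝ)),
      (S t η : ℝ → ℂ) =ᵐ[(volume : Measure ℝ)] fun x => η (x + t))
    (μ : ℕ → ℝ) :
    ∃ W : ℝ → (Lp ℂ 2 (volume : Measure ℝ) ≃ₗᵢ[ℂ] Lp ℂ 2 (volume : Measure ℝ)),
      (∀ η, W 0 η = η) ∧
      (∀ η, Continuous fun t : ℝ => W t η) ∧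
      (∀ t s : ℝ, ∀ η, W (t + s) η = W t (S t (W s ((S t).symm η)))) ∧
      (∀ t : ℝ, 0 ≤ t → ∀ f ∈ futSet t, W t f = f) ∧
      (∀ t : ℝ, ∃ e : HilbertBasis ℕ ℂ (Lp ℂ 2 (volume : Measure ℝ)),
        Summable fun i => ‖W t (e i) - e i‖ ^ 2) ∧
      (∃ g : ℕ → Lp ℂ 2 (volume : Measure ℝ),
        Orthonormal ℂ g ∧ (∀ k, g k ∈ pastSet) ∧
        ∀ t : ℝ, 0 ≤ t → ∀ k : ℕ,
          W (-t) (S (-t) (g k)) = Complex.exp (Complex.I * (μ k : ℂ) * (t : ℂ)) • g k) := by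

  let φ : ℕ × ℕ → Lp ℂ 2 (volume : Measure ℝ) := fun m => bvec (μ m.1) (Nat.pair m.1 m.2)
  have hpair : Function.Injective (fun m : ℕ × ℕ => Nat.pair m.1 m.2) := fun m n h => by
    have := Nat.pair_eq_pair.1 h
    exact Prod.ext this.1 this.2
  have hφ : Orthonormal ℂ φ := by
    refine ⟨fun m => bvec_norm _ _, fun m n hmn => bvec_orth _ _ _ _ fun h => hmn (hpair h)⟩
  have hwadd : ∀ (s t : ℝ) (k : ℕ), Complex.exp (-(Complex.I * μ k * ((s + t : ℝ) : ℂ))) =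
      Complex.exp (-(Complex.I * μ k * s)) * Complex.exp (-(Complex.I * μ k * t)) := by
    intro s t k
    rw [← Complex.exp_add]; congr 1; push_cast; ring
  have hsum : ∀ t : ℝ, Summable fun m : ℕ × ℕ =>
      ‖S t (φ m) - Complex.exp (-(Complex.I * μ m.1 * t)) • φ m‖ ^ 2 := by
    intro t
    refine Summable.of_nonneg_of_le (fun _ => sq_nonneg _)
      (fun m => bvec_shift (S t) t (hSae t) (μ m.1) (Nat.pair m.1 m.2)) ?_
    have h := (summable_geometric_of_lt_one (r := (1 / 2 : ℝ)) (by norm_num) (by norm_num)).mul_left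
      (2 * |t|)
    exact h.comp_injective hpair
  obtain ⟨J, b, U, hUgrp, hU0, hUcont, hUeig, hUfix, hUhs⟩ := aux_main S hSgrp hS0 hScont φ hφ
    (fun t k => Complex.exp (-(Complex.I * μ k * t))) (fun t k => norm_char _ _)
    (fun k => by simp) hwadd (fun k => by fun_prop) hsum
  have hinv : ∀ t η, S t (S (-t) η) = η := fun t η => by rw [← hSgrp]; simp [hS0]
  have hinv' : ∀ t η, S (-t) (S t η) = η := fun t η => by rw [← hSgrp]; simp [hS0]
  have hsymm : ∀ t η, (S t).symm η = S (-t) η := fun t η => by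
    rw [LinearIsometryEquiv.symm_apply_eq, hinv]
  have horth : ∀ f : Lp ℂ 2 (volume : Measure ℝ),
      (∀ᵐ x ∂(volume : Measure ℝ), 0 < x → f x = 0) → ∀ m, inner ℂ (φ m) f = 0 := by
    intro f hf m
    apply bvec_inner_zero
    filter_upwards [hf] with x hx hm
    exact hx (lt_of_lt_of_le (by positivity) hm.1)
  refine ⟨fun t => (S (-t)).trans (U t), ?_, ?_, ?_, ?_, ?_, fun k => φ (k, 0), ?_, ?_, ?_⟩
  · intro η
    simp [hS0, hU0]
  · intro η
    exact aux_cont2 U hUcont _ ((hScont η).comp continuous_neg)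
  · intro t s η
    simp only [LinearIsometryEquiv.trans_apply, hsymm]
    rw [hinv', hUgrp, ← hSgrp, neg_add, add_comm]
  · intro t ht f hf
    have hf' : ∀ᵐ x ∂(volume : Measure ℝ), -t < x → f x = 0 :=
      (ae_restrict_iff' measurableSet_Ioi).1 hf
    have h1 : ∀ᵐ x ∂(volume : Measure ℝ), 0 < x → S (-t) f x = 0 := by
      have h := (measurePreserving_add_right (volume : Measure ℝ) (-t)).quasiMeasurePreserving.ae hf'
      filter_upwards [h, hSae (-t) f] with x hx hx2 h0
      rw [hx2]
      exact hx (by linarith)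
    have h2 : ∀ᵐ x ∂(volume : Measure ℝ), 0 < x → f x = 0 := by
      filter_upwards [hf'] with x hx h0
      exact hx (by linarith)
    change U t (S (-t) f) = f
    rw [hUfix t _ (horth _ h1) (by rw [hinv]; exact horth _ h2), hinv]
  · intro t
    have : Fact ((2 : ENNReal) ≠ ⊤) := ⟨by norm_num⟩
    have : Countable ((ℕ × ℕ) ⊕ J) := aux_countable b b.orthonormal
    obtain ⟨e⟩ : Nonempty (ℕ ≃ ((ℕ × ℕ) ⊕ J)) := nonempty_equiv_of_countable
    have ho : Orthonormal ℂ (fun i => S t (b (e i))) :=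
      (b.orthonormal.comp e e.injective).comp_linearIsometryEquiv (S t)
    have hbot : (Submodule.span ℂ (Set.range (fun i => S t (b (e i)))))ᗮ = ⊥ := by
      rw [Submodule.eq_bot_iff]
      intro x hx
      have h2 : ∀ i, inner ℂ (b i) (S (-t) x) = 0 := by
        intro i
        have := (Submodule.mem_orthogonal _ _).1 hx _ (Submodule.subset_span ⟨e.symm i, rfl⟩)
        simp only [Equiv.apply_symm_apply] at this
        rwa [← hinv t x, LinearIsometryEquiv.inner_map_map] at this
      have := (aux_parseval b (S (-t) x)).tsum_eq
      simp only [h2] at this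
      simpa using this.symm
    refine ⟨HilbertBasis.mkOfOrthogonalEqBot ho hbot, ?_⟩
    simp only [HilbertBasis.coe_mkOfOrthogonalEqBot, LinearIsometryEquiv.trans_apply, hinv']
    exact (hUhs t).comp_injective e.injective
  · exact hφ.comp (fun k => (k, 0)) fun k l h => (Prod.ext_iff.1 h).1
  · intro k
    change (φ (k, 0) : ℝ → ℂ) =ᵐ[_] 0
    rw [Filter.EventuallyEq, ae_restrict_iff' measurableSet_Iio]
    filter_upwards [bvec_coe (μ k) (Nat.pair k 0)] with x hx h0
    change bvec (μ k) (Nat.pair k 0) x = 0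
    rw [hx, bfun, Set.indicator_of_notMem]
    rintro ⟨h1, _⟩
    have : (0 : ℝ) < 2 ^ Nat.pair k 0 := by positivity
    have h0' : x < 0 := h0
    linarith
  · intro t ht k
    change U (-t) (S (- -t) (S (-t) (φ (k, 0)))) = _
    rw [hinv', hUeig]
    congr 2
    push_cast; ring
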